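/- Escape from critical points: Let p be a polynomial with complex coefficients of degree n ≥ 2 and let c ∈ ℂ be a critical point of p (p'(c) = 0) with p(c) ≠ 0. Then for every ρ > 0 there exists z ∈ ℂ with |z − c| < ρ and p(z) ≠ 0 such that the Robust Newton iterate z' = N̂_p(z) satisfies |p(z')| < |p(c)|; consequently the RNM orbit of z does not converge to c. -/

import Mathlib

open Polynomial Filter Topology
open scoped Classical

noncomputable section

/-- The `j`-th derivative of `p`, evaluated at `z`. -/
def dEval (p : Polynomial ℂ) (j : ℕ) (z : ℂ) : ℂ :=
  (Polynomial.derivative^[j] p).eval z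

/-- The index `k(z) = min {j ≥ 1 : p^{(j)}(z) ≠ 0}`. -/
def kIndex (p : Polynomial ℂ) (z : ℂ) : ℕ :=
  sInf {j : ℕ | 1 ≤ j ∧ dEval p j z ≠ 0}

/-- `A(z) = max {|p^{(j)}(z)|/j! : j = 0, …, n}`, where `n` is the degree of `p`. -/
def Amax (p : Polynomial ℂ) (z : ℂ) : ℝ :=
  (Finset.range (p.natDegree + 1)).sup' Finset.nonempty_range_add_one
    (fun j => ‖dEval p j z‖ / (Nat.factorial j))

/-- `u_m = (1/m!) · p(z) · conj(p^{(m)}(z))`. -/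
def uPar (p : Polynomial ℂ) (m : ℕ) (z : ℂ) : ℂ :=
  (1 / (Nat.factorial m : ℂ)) * p.eval z * (starRingEnd ℂ) (dEval p m z)

/-- `γ = 2 · Re(u_m^(m-1))`. -/
def gammaPar (p : Polynomial ℂ) (m : ℕ) (z : ℂ) : ℝ :=
  2 * ((uPar p m z) ^ (m - 1)).re

/-- `δ = -2 · Im(u_m^(m-1))`. -/
def deltaPar (p : Polynomial ℂ) (m : ℕ) (z : ℂ) : ℝ :=
  -2 * ((uPar p m z) ^ (m - 1)).im

/-- `c_m = max {|γ|, |δ|}`. -/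
def cPar (p : Polynomial ℂ) (m : ℕ) (z : ℂ) : ℝ :=
  max |gammaPar p m z| |deltaPar p m z|

/-- The angle `θ`: `0` if `c = |γ|, γ < 0`; `π/m` if `c = |γ|, γ > 0`;
`π/(2m)` if `c = |δ|, δ < 0`; `3π/(2m)` if `c = |δ|, δ > 0`. -/
def thetaPar (p : Polynomial ℂ) (m : ℕ) (z : ℂ) : ℝ :=
  if cPar p m z = |gammaPar p m z| then
    if gammaPar p m z < 0 then 0 else Real.pi / m
  else
    if deltaPar p m z < 0 then Real.pi / (2 * m) else 3 * Real.pi / (2 * m)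

/-- `C_m = c_m · |u_m|^(2-m) / (6 · A(z)²)`. -/
def CPar (p : Polynomial ℂ) (m : ℕ) (z : ℂ) : ℝ :=
  cPar p m z * ‖uPar p m z‖ ^ ((2 : ℤ) - (m : ℤ)) / (6 * (Amax p z) ^ 2)

/-- The Robust Newton iterate with prescribed index `m`:
`z + (C_m/3) · (u_m/|u_m|) · e^(iθ)`. -/
def rniWith (p : Polynomial ℂ) (m : ℕ) (z : ℂ) : ℂ :=
  z + (↑(CPar p m z / 3) : ℂ) * (uPar p m z / (↑(‖uPar p m z‖) : ℂ)) *
    Complex.exp ((↑(thetaPar p m z) : ℂ) * Complex.I)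

/-- The Robust Newton iterate `N̂_p(z)`. -/
def RN (p : Polynomial ℂ) (z : ℂ) : ℂ := rniWith p (kIndex p z) z

/-- The RNM orbit of the seed `z₀`: `z_{t+1} = N̂_p(z_t)` when `p(z_t) ≠ 0`,
and `z_{t+1} = z_t` when `p(z_t) = 0`. -/
def rnmOrbit (p : Polynomial ℂ) (z₀ : ℂ) : ℕ → ℂ
  | 0 => z₀
  | t + 1 =>
      if p.eval (rnmOrbit p z₀ t) = 0 then rnmOrbit p z₀ t
      else RN p (rnmOrbit p z₀ t)

theorem aux_ineq (a T R : ℂ) (A r s : ℝ) (hA : 0 < A) (hr : 0 < r) (hr9 : r ≤ 1 / 9)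
    (hs : 0 < s) (hsr : s ≤ r) (ha : ‖a‖ ≤ A) (hT : ‖T‖ ≤ A * s) (hR : ‖R‖ ≤ 9 / 8 * A * (s * r))
    (hlead : 2 * ((starRingEnd ℂ) a * T).re = -(18 * A ^ 2 * r * s)) :
    ‖a + (T + R)‖ < ‖a‖ := by
  have hexp : ‖a + (T + R)‖ ^ 2 = ‖a‖ ^ 2 + 2 * ((starRingEnd ℂ) a * T).re
      + 2 * ((starRingEnd ℂ) a * R).re + ‖T + R‖ ^ 2 := by
    simp only [← Complex.normSq_eq_norm_sq, Complex.normSq_apply]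
    simp
    ring
  have h1 : ((starRingEnd ℂ) a * R).re ≤ A * (9 / 8 * A * (s * r)) := by
    refine (Complex.re_le_norm _).trans ?_
    rw [norm_mul, Complex.norm_conj]
    gcongr
  have h2 : ‖T + R‖ ≤ 9 / 8 * A * s := by
    refine (norm_add_le _ _).trans ((add_le_add hT hR).trans ?_)
    have : A * s * r ≤ A * s * (1 / 9) := by gcongr
    nlinarith
  have h3 : ‖T + R‖ ^ 2 ≤ (9 / 8) ^ 2 * (A ^ 2 * r * s) := by
    calc ‖T + R‖ ^ 2 ≤ (9 / 8 * A * s) ^ 2 := by gcongr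
      _ = (9 / 8) ^ 2 * (A ^ 2 * s * s) := by ring
      _ ≤ _ := by gcongr
  have h4 : 0 < A ^ 2 * r * s := by positivity
  have : ‖a + (T + R)‖ ^ 2 < ‖a‖ ^ 2 := by nlinarith
  exact lt_of_pow_lt_pow_left₀ 2 (norm_nonneg _) this

theorem tail_bound (f : ℕ → ℂ) (h : ℂ) (A : ℝ) (hA : 0 < A) (hh : ‖h‖ ≤ 1 / 9)
    (m : ℕ) : ∀ k, (∀ j, ‖f j‖ ≤ A) →
    ‖∑ i ∈ Finset.range m, f (k + i) * h ^ i‖ ≤ 9 / 8 * A := by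
  induction m with
  | zero => intro k hf; simp; positivity
  | succ m ih =>
    intro k hf
    rw [Finset.sum_range_succ']
    have e : ∑ i ∈ Finset.range m, f (k + (i + 1)) * h ^ (i + 1)
        = h * ∑ i ∈ Finset.range m, f (k + 1 + i) * h ^ i := by
      rw [Finset.mul_sum]
      refine Finset.sum_congr rfl fun i _ => ?_
      rw [show k + (i + 1) = k + 1 + i by ring]; ring
    rw [e]
    refine (norm_add_le _ _).trans ?_
    have h1 : ‖h * ∑ i ∈ Finset.range m, f (k + 1 + i) * h ^ i‖ ≤ 1 / 9 * (9 / 8 * A) := by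
      rw [norm_mul]
      exact mul_le_mul hh (ih (k + 1) hf) (norm_nonneg _) (by norm_num)
    have h2 := hf k
    simp only [add_zero, pow_zero, mul_one]
    linarith

theorem taylor_coeff_eq (p : Polynomial ℂ) (z : ℂ) (j : ℕ) :
    (Polynomial.taylor z p).coeff j = dEval p j z / (Nat.factorial j) := by
  rw [Polynomial.taylor_coeff, dEval, ← Polynomial.factorial_smul_hasseDeriv]
  have : (Nat.factorial j : ℂ) ≠ 0 := by exact_mod_cast Nat.factorial_ne_zero j
  rw [LinearMap.smul_apply, Polynomial.eval_smul, nsmul_eq_mul]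
  field_simp

theorem coeff_le_Amax (p : Polynomial ℂ) (z : ℂ) (hz : p.eval z ≠ 0) :
    0 < Amax p z ∧ ∀ j, ‖(Polynomial.taylor z p).coeff j‖ ≤ Amax p z := by
  have key : ∀ j ∈ Finset.range (p.natDegree + 1),
      ‖(Polynomial.taylor z p).coeff j‖ ≤ Amax p z := by
    intro j hj
    rw [taylor_coeff_eq, norm_div, Complex.norm_natCast]
    exact Finset.le_sup' (fun j => ‖dEval p j z‖ / (Nat.factorial j)) hj
  have h0 := key 0 (by simp)
  rw [Polynomial.taylor_coeff_zero] at h0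
  have hpos : 0 < Amax p z := lt_of_lt_of_le (norm_pos_iff.2 hz) h0
  refine ⟨hpos, fun j => ?_⟩
  by_cases hj : j ∈ Finset.range (p.natDegree + 1)
  · exact key j hj
  · rw [Polynomial.coeff_eq_zero_of_natDegree_lt]
    · simpa using hpos.le
    · rw [Polynomial.natDegree_taylor]; simpa using hj

theorem kIndex_spec (p : Polynomial ℂ) (hdeg : 2 ≤ p.natDegree) (z : ℂ) :
    1 ≤ kIndex p z ∧ dEval p (kIndex p z) z ≠ 0 ∧
      ∀ j, 1 ≤ j → j < kIndex p z → dEval p j z = 0 := by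
  have hne : {j : ℕ | 1 ≤ j ∧ dEval p j z ≠ 0}.Nonempty := by
    refine ⟨p.natDegree, by omega, ?_⟩
    intro h
    have h1 := taylor_coeff_eq p z p.natDegree
    rw [h, zero_div, ← Polynomial.natDegree_taylor p z, Polynomial.coeff_natDegree,
      Polynomial.leadingCoeff_eq_zero] at h1
    have := Polynomial.natDegree_taylor p z
    rw [h1] at this
    simp at this; omega
  have hm := Nat.sInf_mem hne
  refine ⟨hm.1, hm.2, fun j hj hlt => ?_⟩
  by_contra hcon
  exact Nat.notMem_of_lt_sInf hlt ⟨hj, hcon⟩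

theorem theta_spec (p : Polynomial ℂ) (m : ℕ) (hm : 1 ≤ m) (z : ℂ) :
    2 * (uPar p m z ^ (m - 1) * Complex.exp ((↑(thetaPar p m z) : ℂ) * Complex.I) ^ m).re
      = - cPar p m z := by
  have hm0 : (m : ℂ) ≠ 0 := by exact_mod_cast (by omega : m ≠ 0)
  have hg : gammaPar p m z = 2 * ((uPar p m z) ^ (m - 1)).re := rfl
  have hd : deltaPar p m z = -2 * ((uPar p m z) ^ (m - 1)).im := rfl
  have hcdef : cPar p m z = max |gammaPar p m z| |deltaPar p m z| := rfl
  rw [← Complex.exp_nat_mul]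
  unfold thetaPar
  split_ifs with h1 h2 h2
  · rw [h1, abs_of_neg h2, hg]; simp
  · rw [h1, abs_of_nonneg (not_lt.1 h2), hg]
    have : (m : ℂ) * (((Real.pi / m : ℝ) : ℂ) * Complex.I) = Real.pi * Complex.I := by
      push_cast; field_simp
    rw [this, Complex.exp_pi_mul_I]; simp
  · have h3 : cPar p m z = |deltaPar p m z| := by
      rcases max_choice |gammaPar p m z| |deltaPar p m z| with h | h
      · exact absurd h h1
      · exact h
    rw [h3, abs_of_neg h2, hd]
    have : (m : ℂ) * (((Real.pi / (2 * m) : ℝ) : ℂ) * Complex.I) = Real.pi / 2 * Complex.I := by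
      push_cast; field_simp
    rw [this, Complex.exp_pi_div_two_mul_I]; simp
  · have h3 : cPar p m z = |deltaPar p m z| := by
      rcases max_choice |gammaPar p m z| |deltaPar p m z| with h | h
      · exact absurd h h1
      · exact h
    rw [h3, abs_of_nonneg (not_lt.1 h2), hd]
    have : (m : ℂ) * (((3 * Real.pi / (2 * m) : ℝ) : ℂ) * Complex.I)
        = Real.pi * Complex.I + Real.pi / 2 * Complex.I := by
      push_cast; field_simp; ring
    rw [this, Complex.exp_add, Complex.exp_pi_mul_I, Complex.exp_pi_div_two_mul_I]; simp

theorem cPar_bounds (p : Polynomial ℂ) (m : ℕ) (z : ℂ) (hu : uPar p m z ≠ 0) :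
    0 < cPar p m z ∧ cPar p m z ≤ 2 * ‖uPar p m z‖ ^ (m - 1) := by
  have hw : uPar p m z ^ (m - 1) ≠ 0 := pow_ne_zero _ hu
  rw [← norm_pow]
  unfold cPar gammaPar deltaPar
  generalize uPar p m z ^ (m - 1) = w at hw
  constructor
  · by_contra hcon
    push Not at hcon
    have h1 := (le_max_left _ _).trans hcon
    have h2 := (le_max_right _ _).trans hcon
    have h1 := abs_nonpos_iff.1 h1
    have h2 := abs_nonpos_iff.1 h2
    apply hw
    apply Complex.ext <;> simp <;> linarith
  · apply max_le
    · rw [abs_mul]; have := Complex.abs_re_le_norm w; norm_num; exact this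
    · rw [abs_mul]; have := Complex.abs_im_le_norm w; norm_num; exact this

theorem RN_descent (p : Polynomial ℂ) (hdeg : 2 ≤ p.natDegree) (z : ℂ) (hz : p.eval z ≠ 0) :
    ‖p.eval (RN p z)‖ < ‖p.eval z‖ := by
  obtain ⟨hk1, hk2, hk3⟩ := kIndex_spec p hdeg z
  obtain ⟨hA, hcoef⟩ := coeff_le_Amax p z hz
  unfold RN rniWith
  generalize kIndex p z = k at *
  have hfac : (Nat.factorial k : ℂ) ≠ 0 := by exact_mod_cast Nat.factorial_ne_zero k
  have hth := theta_spec p k hk1 z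
  set q := Polynomial.taylor z p with hq
  have hueq : uPar p k z = p.eval z * (starRingEnd ℂ) (q.coeff k) := by
    rw [hq, taylor_coeff_eq]; unfold uPar; simp; ring
  have hqk : q.coeff k ≠ 0 := by
    rw [hq, taylor_coeff_eq]; exact div_ne_zero hk2 hfac
  have hq0 : q.coeff 0 = p.eval z := Polynomial.taylor_coeff_zero z p
  have hu : uPar p k z ≠ 0 := by
    rw [hueq]; exact mul_ne_zero hz (by simpa using hqk)
  obtain ⟨hc0, hc1⟩ := cPar_bounds p k z hu
  have hC : CPar p k z = cPar p k z * ‖uPar p k z‖ ^ ((2 : ℤ) - (k : ℤ)) / (6 * (Amax p z) ^ 2) :=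
    rfl
  generalize CPar p k z = C at *
  generalize thetaPar p k z = θ at *
  generalize cPar p k z = c at *
  generalize Amax p z = A at *
  set u := uPar p k z with hudef
  have hun : 0 < ‖u‖ := norm_pos_iff.2 hu
  have huA : ‖u‖ ≤ A * A := by
    rw [hueq, norm_mul, Complex.norm_conj, ← hq0]
    exact mul_le_mul (hcoef 0) (hcoef k) (norm_nonneg _) hA.le
  have hzp : ‖u‖ ^ (k - 1) * ‖u‖ ^ ((2 : ℤ) - (k : ℤ)) = ‖u‖ := by
    rw [← zpow_natCast, ← zpow_add₀ hun.ne', Nat.cast_sub hk1]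
    have : ((k : ℤ) - ((1 : ℕ) : ℤ) + (2 - (k : ℤ))) = 1 := by push_cast; ring
    rw [this, zpow_one]
  have hzpos : 0 < ‖u‖ ^ ((2 : ℤ) - (k : ℤ)) := by positivity
  have hCpos : 0 < C := by rw [hC]; positivity
  have hC3 : C ≤ 1 / 3 := by
    rw [hC, div_le_iff₀ (by positivity)]
    calc c * ‖u‖ ^ ((2 : ℤ) - (k : ℤ)) ≤ 2 * ‖u‖ ^ (k - 1) * ‖u‖ ^ ((2 : ℤ) - (k : ℤ)) := by gcongr
      _ = 2 * ‖u‖ := by rw [mul_assoc, hzp]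
      _ ≤ _ := by nlinarith
  set r : ℝ := C / 3 with hr
  have hr0 : 0 < r := by positivity
  have hr9 : r ≤ 1 / 9 := by rw [hr]; linarith
  set E := Complex.exp ((θ : ℂ) * Complex.I) with hE
  have hEn : ‖E‖ = 1 := Complex.norm_exp_ofReal_mul_I θ
  set h : ℂ := (r : ℂ) * (u / (‖u‖ : ℂ)) * E with hh
  have hunC : (‖u‖ : ℂ) ≠ 0 := by exact_mod_cast hun.ne'
  have hhn : ‖h‖ = r := by
    rw [hh, norm_mul, norm_mul, norm_div, hEn, Complex.norm_real, Complex.norm_real, norm_norm,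
      div_self hun.ne', Real.norm_of_nonneg hr0.le]; ring
  have hev : p.eval (z + h) = q.coeff 0 + (q.coeff k * h ^ k +
      h ^ (k + 1) * ∑ i ∈ Finset.range (p.natDegree + 1), q.coeff (k + 1 + i) * h ^ i) := by
    have e1 : p.eval (z + h) = q.eval h := by rw [hq, Polynomial.taylor_eval, add_comm]
    have hnd : q.natDegree < k + 1 + (p.natDegree + 1) := by
      rw [hq, Polynomial.natDegree_taylor]; omega
    rw [e1, Polynomial.eval_eq_sum_range' hnd, Finset.sum_range_add, Finset.sum_range_succ]
    have e2 : ∑ x ∈ Finset.range k, q.coeff x * h ^ x = q.coeff 0 := by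
      rw [Finset.sum_eq_single_of_mem 0 (by simp; omega)]
      · simp
      · intro j hj hj0
        rw [hq, taylor_coeff_eq, hk3 j (by omega) (by simpa using hj)]; simp
    rw [e2, Finset.mul_sum, add_assoc]
    congr 2
    refine Finset.sum_congr rfl fun i _ => ?_
    rw [pow_add]; ring
  rw [hev, ← hq0]
  refine aux_ineq _ _ _ A r (r ^ k) hA hr0 hr9 (by positivity) ?_ (hcoef 0) ?_ ?_ ?_
  · calc r ^ k ≤ r ^ 1 := pow_le_pow_of_le_one hr0.le (by linarith) hk1
      _ = r := pow_one r
  · rw [norm_mul, norm_pow, hhn]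
    gcongr
    exact hcoef k
  · rw [norm_mul, norm_pow, hhn, pow_succ, mul_comm]
    gcongr
    exact tail_bound q.coeff h A hA (by rw [hhn]; exact hr9) _ _ hcoef
  · have hconj : (starRingEnd ℂ) (q.coeff 0) * q.coeff k = (starRingEnd ℂ) u := by
      rw [hueq, hq0]; simp
    have huu : (starRingEnd ℂ) u * u = (‖u‖ : ℂ) ^ 2 := by
      rw [mul_comm, Complex.mul_conj, Complex.normSq_eq_norm_sq]; push_cast; rfl
    have hz2 : ((‖u‖ ^ ((2 : ℤ) - (k : ℤ)) : ℝ) : ℂ) = (‖u‖ : ℂ) ^ 2 / (‖u‖ : ℂ) ^ k := by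
      push_cast
      rw [zpow_sub₀ hunC, zpow_natCast]
      norm_cast
    have hmain : (starRingEnd ℂ) (q.coeff 0) * (q.coeff k * h ^ k)
        = ((r ^ k * ‖u‖ ^ ((2 : ℤ) - (k : ℤ)) : ℝ) : ℂ) * (u ^ (k - 1) * E ^ k) := by
      rw [← mul_assoc, hconj, hh, Complex.ofReal_mul, hz2, ← huu, mul_pow, mul_pow, div_pow]
      obtain ⟨k', rfl⟩ : ∃ k', k = k' + 1 := ⟨k - 1, by omega⟩
      simp only [Nat.add_sub_cancel, Complex.ofReal_pow]
      rw [pow_succ u]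
      ring
    rw [hmain, Complex.re_ofReal_mul]
    have hc' : c * ‖u‖ ^ ((2 : ℤ) - (k : ℤ)) = 18 * A ^ 2 * r := by
      rw [hr, hC]; field_simp; norm_num
    calc _ = r ^ k * ‖u‖ ^ ((2 : ℤ) - (k : ℤ)) * (2 * (u ^ (k - 1) * E ^ k).re) := by ring
      _ = -(c * ‖u‖ ^ ((2 : ℤ) - (k : ℤ)) * r ^ k) := by rw [hth]; ring
      _ = _ := by rw [hc']

/-- **Escape from critical points.** Let `c` be a critical point of `p` with `p(c) ≠ 0`.
Then in every neighborhood of `c` there is a point `z` with `p(z) ≠ 0` whose Robust Newton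
iterate `z' = N̂_p(z)` satisfies `|p(z')| < |p(c)|`; consequently the RNM orbit of `z` does
not converge to `c`. -/
theorem rnm_escapes_critical_point (p : Polynomial ℂ) (hdeg : 2 ≤ p.natDegree)
    (c : ℂ) (hc : p.derivative.eval c = 0) (hpc : p.eval c ≠ 0) :
    ∀ ρ : ℝ, 0 < ρ → ∃ z : ℂ, ‖z - c‖ < ρ ∧ p.eval z ≠ 0 ∧
      ‖p.eval (RN p z)‖ < ‖p.eval c‖ ∧
      ¬ Filter.Tendsto (rnmOrbit p z) Filter.atTop (nhds c) := by
  intro ρ hρ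
  have hd := RN_descent p hdeg c hpc
  refine ⟨c, by simpa using hρ, hpc, hd, fun hT => ?_⟩
  have hmono : ∀ t, ‖p.eval (rnmOrbit p c (t + 1))‖ ≤ ‖p.eval (RN p c)‖ := by
    intro t
    induction t with
    | zero => simp [rnmOrbit, hpc]
    | succ t ih =>
      rw [rnmOrbit]
      split_ifs with h
      · exact ih
      · exact (RN_descent p hdeg _ h).le.trans ih
  have hT2 : Tendsto (fun t => ‖p.eval (rnmOrbit p c (t + 1))‖) atTop (nhds ‖p.eval c‖) :=
    ((p.continuous.norm.tendsto c).comp hT).comp (tendsto_add_atTop_nat 1)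
  exact absurd (le_of_tendsto' hT2 hmono) (not_le.2 hd)
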